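/- Let A, B, C be a maximal positive solution of the SL(2,ℝ) negative cross curvature flow ODE system with B_0 > C_0 > 0, A_0 > 0, and suppose that at t = 0 the ratios a = A/B and c = C/B satisfy a ≤ (1/3)(2 sqrt(1 - c + c^2) - 1 - c) (equivalently F_1(0) ≥ 0). Then there exists a time t_1 > 0 in the interval of existence at which F_1(t_1) < 0 and F_2(t_1) < 0; i.e., the condition F_1 ≥ 0 cannot persist for the whole interval of existence. -/

import Mathlib

/-!
The proof is by contradiction: suppose `F₁ < 0` and `F₂ < 0` never hold together.

Write `F₁ = (B - C)² - 3A² - 2A(B + C)`. If `F₁ ≥ 0` and `B ≥ C`, then `B - C ≥ A`, and this forces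
`F₂ ≤ -A²` and `F₃ ≥ A²`. In particular `F₂ < 0` persists for a short time, so under the
contradiction hypothesis the condition `F₁ ≥ 0`, `B ≥ C` is both open to the right and closed; it
holds initially, hence on the whole interval of existence (`region_persists`).

On this region `A` and `C` are nondecreasing and `B` is nonincreasing, so `A₀ ≤ A ≤ B ≤ B₀` and
`C₀ ≤ C ≤ B ≤ B₀`, and `A' ≥ 2A₀⁵ / B₀⁶ > 0`. If `T = ∞`, the last bound contradicts `A ≤ B₀`. If
`T < ∞`, the three monotone bounded functions converge to positive limits as `t → T`; restarting
the ODE from the limit point by Picard–Lindelöf extends the solution past `T`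
(`IsSolSL2.exists_extension`), contradicting maximality.
-/


/-- `F1 = -3A² + B² + C² - 2BC - 2AC - 2AB` for the `SL(2,ℝ)` cross curvature tensor. -/
def sl2F1 (A B C : ℝ) : ℝ :=
  -3 * A ^ 2 + B ^ 2 + C ^ 2 - 2 * B * C - 2 * A * C - 2 * A * B

/-- `F2 = -3B² + A² + C² + 2BC + 2AC - 2AB` for the `SL(2,ℝ)` cross curvature tensor. -/
def sl2F2 (A B C : ℝ) : ℝ :=
  -3 * B ^ 2 + A ^ 2 + C ^ 2 + 2 * B * C + 2 * A * C - 2 * A * B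

/-- `F3 = -3C² + A² + B² + 2BC - 2AC + 2AB` for the `SL(2,ℝ)` cross curvature tensor. -/
def sl2F3 (A B C : ℝ) : ℝ :=
  -3 * C ^ 2 + A ^ 2 + B ^ 2 + 2 * B * C - 2 * A * C + 2 * A * B

/-- A triple of functions solves the `SL(2,ℝ)` negative cross curvature flow ODE system
(with positivity) on a set `s ⊆ ℝ`. -/
def IsSolSL2 (A B C : ℝ → ℝ) (s : Set ℝ) : Prop :=
  ∀ t ∈ s,
    (0 < A t ∧ 0 < B t ∧ 0 < C t) ∧
    HasDerivAt A
      (-2 * A t * sl2F2 (A t) (B t) (C t) * sl2F3 (A t) (B t) (C t) /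
        (A t * B t * C t) ^ 2) t ∧
    HasDerivAt B
      (-2 * B t * sl2F3 (A t) (B t) (C t) * sl2F1 (A t) (B t) (C t) /
        (A t * B t * C t) ^ 2) t ∧
    HasDerivAt C
      (-2 * C t * sl2F1 (A t) (B t) (C t) * sl2F2 (A t) (B t) (C t) /
        (A t * B t * C t) ^ 2) t

/-- A maximal solution of the `SL(2,ℝ)` system on `{t | 0 ≤ t, t < T}` (`T ∈ (0,∞]` an
extended real): a solution admitting no extension to a strictly larger interval. -/
def IsMaxSolSL2 (A B C : ℝ → ℝ) (T : EReal) : Prop :=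
  IsSolSL2 A B C {t : ℝ | 0 ≤ t ∧ (t : EReal) < T} ∧
  ∀ (A' B' C' : ℝ → ℝ) (T' : EReal), T < T' →
    IsSolSL2 A' B' C' {t : ℝ | 0 ≤ t ∧ (t : EReal) < T'} →
    ¬ (∀ t : ℝ, 0 ≤ t → (t : EReal) < T → A' t = A t ∧ B' t = B t ∧ C' t = C t)

open Set Filter Topology

/-! ### Extension of solutions -/

/-- An integral curve of a `C¹` vector field which has a limit at the right endpoint `T` extends
past `T`. -/
lemma exists_integralCurve_extension {E : Type*} [NormedAddCommGroup E] [NormedSpace ℝ E]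
    [CompleteSpace E] {v : E → E} {x₀ : E} (hv : ContDiffAt ℝ 1 v x₀) {γ : ℝ → E} {a T : ℝ}
    (haT : a < T) (hγ : ∀ t ∈ Ico a T, HasDerivAt γ (v (γ t)) t)
    (hlim : Tendsto γ (𝓝[<] T) (𝓝 x₀)) :
    ∃ η : ℝ → E, ∃ ε > 0, (∀ t < T, η t = γ t) ∧ η T = x₀ ∧
      ∀ t ∈ Ico a (T + ε), HasDerivAt η (v (η t)) t := by
  obtain ⟨α, hαT, ε, hε, hα⟩ :=
    hv.exists_forall_mem_closedBall_exists_eq_forall_mem_Ioo_hasDerivAt₀ T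
  set η : ℝ → E := fun t => if t < T then γ t else α t with hη
  have hlt : ∀ t < T, η t = γ t := fun t ht => by simp [hη, ht]
  have hge : ∀ t, T ≤ t → η t = α t := fun t ht => by simp [hη, not_lt.2 ht]
  have hηT : η T = x₀ := by rw [hge T le_rfl, hαT]
  have hder_lt : ∀ t ∈ Ico a T, HasDerivAt η (v (η t)) t := fun t ht => by
    rw [hlt t ht.2]
    exact (hγ t ht).congr_of_eventuallyEq
      (by filter_upwards [Iio_mem_nhds ht.2] with s hs using hlt s hs)
  have hmem : Ico a T ∈ 𝓝[<] T := Ico_mem_nhdsLT haT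
  have hηlim : Tendsto η (𝓝[<] T) (𝓝 x₀) := by
    refine hlim.congr' ?_
    filter_upwards [self_mem_nhdsWithin] with s hs using (hlt s hs).symm
  refine ⟨η, ε, hε, hlt, hηT, fun t ht => ?_⟩
  rcases lt_trichotomy t T with h | rfl | h
  · exact hder_lt t ⟨ht.1, h⟩
  · -- At the junction the left derivative is the limit of the derivatives, and the right one is
    -- that of the new integral curve.
    have hleft : HasDerivWithinAt η (v x₀) (Iic t) t := by
      refine hasDerivWithinAt_Iic_of_tendsto_deriv (s := Ico a t)
        (fun s hs => (hder_lt s hs).differentiableAt.differentiableWithinAt) ?_ hmem ?_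
      · have : Tendsto η (𝓝[<] t) (𝓝 (η t)) := by rwa [hηT]
        exact this.mono_left (nhdsWithin_mono _ fun s hs => hs.2)
      · refine (hv.continuousAt.tendsto.comp hηlim).congr' ?_
        filter_upwards [hmem] with s hs using (hder_lt s hs).deriv.symm
    have hright : HasDerivWithinAt η (v x₀) (Ici t) t := by
      have h1 := hα t ⟨by linarith, by linarith⟩
      rw [hαT] at h1
      exact h1.hasDerivWithinAt.congr (fun s hs => hge s hs) (hge t le_rfl)
    rw [hηT]
    simpa using hleft.union hright
  · rw [hge t h.le]
    refine (hα t ⟨by linarith, ht.2⟩).congr_of_eventuallyEq ?_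
    filter_upwards [Ioi_mem_nhds h] with s hs using hge s (le_of_lt hs)

/-- The right-hand side of the ODE system, as a vector field on `ℝ × ℝ × ℝ`. -/
noncomputable def sl2Field (p : ℝ × ℝ × ℝ) : ℝ × ℝ × ℝ :=
  (-2 * p.1 * sl2F2 p.1 p.2.1 p.2.2 * sl2F3 p.1 p.2.1 p.2.2 / (p.1 * p.2.1 * p.2.2) ^ 2,
   -2 * p.2.1 * sl2F3 p.1 p.2.1 p.2.2 * sl2F1 p.1 p.2.1 p.2.2 / (p.1 * p.2.1 * p.2.2) ^ 2,
   -2 * p.2.2 * sl2F1 p.1 p.2.1 p.2.2 * sl2F2 p.1 p.2.1 p.2.2 / (p.1 * p.2.1 * p.2.2) ^ 2)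

lemma contDiffAt_sl2Field {p : ℝ × ℝ × ℝ} (h1 : 0 < p.1) (h2 : 0 < p.2.1) (h3 : 0 < p.2.2) :
    ContDiffAt ℝ 1 sl2Field p := by
  have hne : (p.1 * p.2.1 * p.2.2) ^ 2 ≠ 0 := by positivity
  unfold sl2Field sl2F1 sl2F2 sl2F3
  refine ContDiffAt.prodMk ?_ (ContDiffAt.prodMk ?_ ?_) <;>
    exact ContDiffAt.div (by fun_prop) (by fun_prop) hne

/-- A solution on `[0, T)`, `T < ∞`, whose components have positive limits at `T` extends to a
solution on a longer interval. -/
lemma IsSolSL2.exists_extension {A B C : ℝ → ℝ} {T : ℝ} (hT : 0 < T)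
    (hsol : ∀ t, 0 ≤ t → t < T → IsSolSL2 A B C {t})
    {a b c : ℝ} (ha : 0 < a) (hb : 0 < b) (hc : 0 < c)
    (hA : Tendsto A (𝓝[<] T) (𝓝 a)) (hB : Tendsto B (𝓝[<] T) (𝓝 b))
    (hC : Tendsto C (𝓝[<] T) (𝓝 c)) :
    ∃ A' B' C' : ℝ → ℝ, ∃ T' > T, (∀ t, 0 ≤ t → t < T' → IsSolSL2 A' B' C' {t}) ∧
      ∀ t < T, A' t = A t ∧ B' t = B t ∧ C' t = C t := by
  have hv := contDiffAt_sl2Field (p := (a, b, c)) ha hb hc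
  have hγ : ∀ t ∈ Ico 0 T, HasDerivAt (fun t => (A t, B t, C t)) (sl2Field (A t, B t, C t)) t := by
    intro t ht
    obtain ⟨-, h1, h2, h3⟩ := hsol t ht.1 ht.2 t rfl
    exact h1.prodMk (h2.prodMk h3)
  obtain ⟨η, ε, hε, hlt, hηT, hη⟩ := exists_integralCurve_extension hv hT hγ
    (hA.prodMk_nhds (hB.prodMk_nhds hC))
  -- Positivity survives for a short time after `T`.
  have hpos : ∀ᶠ t in 𝓝 T, 0 < (η t).1 ∧ 0 < (η t).2.1 ∧ 0 < (η t).2.2 := by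
    have hcont : ContinuousAt η T := (hη T ⟨hT.le, by linarith⟩).continuousAt
    have h1 : ContinuousAt (fun t => (η t).1) T := by fun_prop
    have h2 : ContinuousAt (fun t => (η t).2.1) T := by fun_prop
    have h3 : ContinuousAt (fun t => (η t).2.2) T := by fun_prop
    exact (h1.eventually_const_lt (by simpa [hηT] using ha)).and
      ((h2.eventually_const_lt (by simpa [hηT] using hb)).and
        (h3.eventually_const_lt (by simpa [hηT] using hc)))
  obtain ⟨δ, hδ, hball⟩ := Metric.eventually_nhds_iff.1 hpos
  refine ⟨fun t => (η t).1, fun t => (η t).2.1, fun t => (η t).2.2, T + min ε δ,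
    by have := lt_min hε hδ; linarith, ?_, fun t ht => by simp [hlt t ht]⟩
  rintro _ ht0 htT t rfl
  have hd := hη _ ⟨ht0, htT.trans_le (by gcongr; exact min_le_left _ _)⟩
  refine ⟨?_, hd.fst, hd.snd.fst, hd.snd.snd⟩
  rcases lt_or_ge t T with h | h
  · simpa [hlt _ h] using (hsol _ ht0 h _ rfl).1
  · refine hball ?_
    rw [Real.dist_eq, abs_of_nonneg (by linarith)]
    have := min_le_right ε δ
    linarith

/-! ### The region `F₁ ≥ 0`, `B ≥ C` -/

section Region

variable {A B C : ℝ}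

lemma le_sub_of_sl2F1_nonneg (hA : 0 < A) (hB : 0 < B) (hC : 0 < C) (h : 0 ≤ sl2F1 A B C)
    (hCB : C ≤ B) : A ≤ B - C := by
  unfold sl2F1 at h
  refine le_of_sq_le_sq ?_ (by linarith)
  nlinarith [mul_pos hA hB, mul_pos hA hC, mul_pos hA hA]

lemma sl2F2_le (hA : 0 < A) (hB : 0 < B) (hC : 0 < C) (h : A ≤ B - C) :
    sl2F2 A B C ≤ -A ^ 2 := by
  unfold sl2F2
  nlinarith [mul_nonneg (sub_nonneg.2 h) hA.le, mul_nonneg (sub_nonneg.2 h) hB.le,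
    mul_nonneg (sub_nonneg.2 h) hC.le, mul_pos hA hB, mul_pos hA hC, mul_pos hB hC]

lemma le_sl2F3 (hA : 0 < A) (hB : 0 < B) (hC : 0 < C) (h : A ≤ B - C) :
    A ^ 2 ≤ sl2F3 A B C := by
  unfold sl2F3
  have : 0 ≤ B - C := by linarith
  nlinarith [mul_nonneg this hA.le, mul_nonneg this hB.le, mul_nonneg this hC.le]

/-- The initial condition on the ratios is `F₁ ≥ 0` solved for `A / B`. -/
lemma sl2F1_nonneg_of_ratio (hA : 0 < A) (hB : 0 < B) (hC : 0 < C)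
    (h : A / B ≤ 1 / 3 * (2 * Real.sqrt (1 - C / B + (C / B) ^ 2) - 1 - C / B)) :
    0 ≤ sl2F1 A B C := by
  obtain ⟨a, ha⟩ : ∃ a, a = A / B := ⟨_, rfl⟩
  obtain ⟨c, hc⟩ : ∃ c, c = C / B := ⟨_, rfl⟩
  have ha0 : 0 < a := ha ▸ div_pos hA hB
  have hc0 : 0 < c := hc ▸ div_pos hC hB
  have hAB : A = a * B := by rw [ha]; field_simp
  have hCB : C = c * B := by rw [hc]; field_simp
  rw [← ha, ← hc] at h
  have hs := Real.sq_sqrt (show 0 ≤ 1 - c + c ^ 2 by nlinarith [sq_nonneg (1 - c)])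
  have hsq : (3 * a + 1 + c) ^ 2 ≤ (2 * Real.sqrt (1 - c + c ^ 2)) ^ 2 := by
    gcongr
    linarith
  rw [mul_pow, hs] at hsq
  have : sl2F1 A B C = B ^ 2 * (1 - 2 * c + c ^ 2 - 3 * a ^ 2 - 2 * a - 2 * a * c) := by
    unfold sl2F1
    rw [hAB, hCB]
    ring
  rw [this]
  exact mul_nonneg (sq_nonneg B) (by nlinarith)

end Region

/-- If `F₁ < 0` and `F₂ < 0` never hold together on `(0, b]`, then the region `F₁ ≥ 0`, `B ≥ C` is
preserved on `[0, b]`: in it `F₂ < 0`, so the trajectory cannot leave it through `F₁ = 0`, nor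
through `B = C`, where `F₁ < 0`. -/
lemma region_persists {A B C : ℝ → ℝ} {b : ℝ} (hsol : IsSolSL2 A B C (Icc 0 b))
    (hneg : ∀ t, 0 < t → t ≤ b → sl2F1 (A t) (B t) (C t) < 0 → 0 ≤ sl2F2 (A t) (B t) (C t))
    (h0 : 0 ≤ sl2F1 (A 0) (B 0) (C 0)) (h0' : C 0 ≤ B 0) :
    ∀ t ∈ Icc 0 b, 0 ≤ sl2F1 (A t) (B t) (C t) ∧ C t ≤ B t := by
  have cA : ∀ t ∈ Icc 0 b, ContinuousAt A t := fun t ht => (hsol t ht).2.1.continuousAt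
  have cB : ∀ t ∈ Icc 0 b, ContinuousAt B t := fun t ht => (hsol t ht).2.2.1.continuousAt
  have cC : ∀ t ∈ Icc 0 b, ContinuousAt C t := fun t ht => (hsol t ht).2.2.2.continuousAt
  have c1 : ContinuousOn (fun t => sl2F1 (A t) (B t) (C t)) (Icc 0 b) := fun t ht => by
    have := cA t ht; have := cB t ht; have := cC t ht
    unfold sl2F1
    exact ContinuousAt.continuousWithinAt (by fun_prop)
  have hclosed : IsClosed ({t | 0 ≤ sl2F1 (A t) (B t) (C t) ∧ C t ≤ B t} ∩ Icc 0 b) := by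
    have e1 := c1.preimage_isClosed_of_isClosed isClosed_Icc isClosed_Ici (t := Ici 0)
    have e2 := ContinuousOn.preimage_isClosed_of_isClosed (f := fun t => B t - C t) (s := Icc 0 b)
      (fun t ht => ((cB t ht).sub (cC t ht)).continuousWithinAt) isClosed_Icc isClosed_Ici
      (t := Ici 0)
    convert e1.inter e2 using 1
    ext t
    simp only [mem_inter_iff, mem_ofPred_eq, mem_preimage, mem_Ici, sub_nonneg]
    tauto
  refine hclosed.Icc_subset_of_forall_mem_nhdsWithin ⟨h0, h0'⟩ ?_
  rintro x ⟨⟨hx1, hx2⟩, hx0, hxb⟩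
  have hx : x ∈ Icc 0 b := ⟨hx0, hxb.le⟩
  obtain ⟨⟨pA, pB, pC⟩, -⟩ := hsol x hx
  have hgap := le_sub_of_sl2F1_nonneg pA pB pC hx1 hx2
  have hF2 : sl2F2 (A x) (B x) (C x) < 0 :=
    (sl2F2_le pA pB pC hgap).trans_lt (neg_lt_zero.2 (by positivity))
  have c2 : ContinuousAt (fun t => sl2F2 (A t) (B t) (C t)) x := by
    have := cA x hx; have := cB x hx; have := cC x hx
    unfold sl2F2
    fun_prop
  filter_upwards [mem_nhdsWithin_of_mem_nhds (c2.eventually_lt_const hF2),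
    mem_nhdsWithin_of_mem_nhds ((cC x hx).eventually_lt (cB x hx) (by linarith)),
    Ioo_mem_nhdsGT hxb] with t ht2 htCB ht
  refine ⟨?_, le_of_lt htCB⟩
  by_contra hcon
  exact absurd ht2 (not_lt.2 (hneg t (hx0.trans_lt ht.1) ht.2.le (not_le.1 hcon)))

/-- For a maximal positive solution of the `SL(2,ℝ)` negative cross curvature flow with
`B0 > C0 > 0`, `A0 > 0` and initial ratios `a = A0/B0`, `c = C0/B0` satisfying
`a ≤ (1/3)(2√(1-c+c²) - 1 - c)` (equivalently `F1(0) ≥ 0`): there is a time `t1 > 0`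
in the interval of existence at which `F1(t1) < 0` and `F2(t1) < 0`; i.e. the condition
`F1 ≥ 0` cannot persist. -/
theorem sl2_F1_nonneg_not_persistent
    (A0 B0 C0 : ℝ) (hA0 : 0 < A0) (hC0 : 0 < C0) (hB0C0 : B0 > C0)
    (A B C : ℝ → ℝ) (T : EReal) (hT : 0 < T)
    (hmax : IsMaxSolSL2 A B C T)
    (hinitA : A 0 = A0) (hinitB : B 0 = B0) (hinitC : C 0 = C0)
    (hF1_0 : A0 / B0 ≤
      1 / 3 * (2 * Real.sqrt (1 - C0 / B0 + (C0 / B0) ^ 2) - 1 - C0 / B0)) :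
    ∃ t1 : ℝ, 0 < t1 ∧ (t1 : EReal) < T ∧
      sl2F1 (A t1) (B t1) (C t1) < 0 ∧ sl2F2 (A t1) (B t1) (C t1) < 0 := by
  obtain ⟨hsol, hext⟩ := hmax
  by_contra! hcon
  set S : Set ℝ := {t : ℝ | 0 ≤ t ∧ (t : EReal) < T} with hS
  have h0S : (0 : ℝ) ∈ S := ⟨le_rfl, by simpa using hT⟩
  have hSord : ∀ t ∈ S, Icc 0 t ⊆ S := fun t ht s hs =>
    ⟨hs.1, (EReal.coe_le_coe_iff.2 hs.2).trans_lt ht.2⟩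
  have hSconv : Convex ℝ S := by
    refine OrdConnected.convex ⟨fun x hx y hy s hs => hSord y hy ⟨hx.1.trans hs.1, hs.2⟩⟩
  have hB0 : 0 < B0 := hC0.trans hB0C0
  have hreg : ∀ t ∈ S, 0 ≤ sl2F1 (A t) (B t) (C t) ∧ C t ≤ B t := fun t ht =>
    region_persists (fun s hs => hsol s (hSord t ht hs))
      (fun s hs0 hst => hcon s hs0 (hSord t ht ⟨hs0.le, hst⟩).2)
      (by rw [hinitA, hinitB, hinitC]; exact sl2F1_nonneg_of_ratio hA0 hB0 hC0 hF1_0)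
      (by rw [hinitB, hinitC]; exact hB0C0.le) t ⟨ht.1, le_rfl⟩
  have hgap : ∀ t ∈ S, A t ≤ B t - C t := fun t ht =>
    le_sub_of_sl2F1_nonneg (hsol t ht).1.1 (hsol t ht).1.2.1 (hsol t ht).1.2.2
      (hreg t ht).1 (hreg t ht).2
  have hF2 : ∀ t ∈ S, sl2F2 (A t) (B t) (C t) ≤ -(A t) ^ 2 := fun t ht =>
    sl2F2_le (hsol t ht).1.1 (hsol t ht).1.2.1 (hsol t ht).1.2.2 (hgap t ht)
  have hF3 : ∀ t ∈ S, (A t) ^ 2 ≤ sl2F3 (A t) (B t) (C t) := fun t ht =>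
    le_sl2F3 (hsol t ht).1.1 (hsol t ht).1.2.1 (hsol t ht).1.2.2 (hgap t ht)
  have hmonoA : MonotoneOn A S := by
    refine monotoneOn_of_deriv_nonneg hSconv
      (fun t ht => (hsol t ht).2.1.continuousAt.continuousWithinAt)
      (fun t ht => (hsol t (interior_subset ht)).2.1.differentiableAt.differentiableWithinAt) ?_
    intro t ht
    have ht := interior_subset ht
    rw [(hsol t ht).2.1.deriv]
    have h2 : 0 ≤ -sl2F2 (A t) (B t) (C t) := by nlinarith [hF2 t ht, sq_nonneg (A t)]
    have h3 : 0 ≤ sl2F3 (A t) (B t) (C t) := (sq_nonneg _).trans (hF3 t ht)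
    refine div_nonneg ?_ (sq_nonneg _)
    nlinarith [mul_nonneg (mul_nonneg (hsol t ht).1.1.le h2) h3]
  have hmonoC : MonotoneOn C S := by
    refine monotoneOn_of_deriv_nonneg hSconv
      (fun t ht => (hsol t ht).2.2.2.continuousAt.continuousWithinAt)
      (fun t ht => (hsol t (interior_subset ht)).2.2.2.differentiableAt.differentiableWithinAt) ?_
    intro t ht
    have ht := interior_subset ht
    rw [(hsol t ht).2.2.2.deriv]
    have h2 : 0 ≤ -sl2F2 (A t) (B t) (C t) := by nlinarith [hF2 t ht, sq_nonneg (A t)]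
    refine div_nonneg ?_ (sq_nonneg _)
    nlinarith [mul_nonneg (mul_nonneg (hsol t ht).1.2.2.le (hreg t ht).1) h2]
  have hantiB : AntitoneOn B S := by
    refine antitoneOn_of_deriv_nonpos hSconv
      (fun t ht => (hsol t ht).2.2.1.continuousAt.continuousWithinAt)
      (fun t ht => (hsol t (interior_subset ht)).2.2.1.differentiableAt.differentiableWithinAt) ?_
    intro t ht
    have ht := interior_subset ht
    rw [(hsol t ht).2.2.1.deriv]
    have h3 : 0 ≤ sl2F3 (A t) (B t) (C t) := (sq_nonneg _).trans (hF3 t ht)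
    refine div_nonpos_of_nonpos_of_nonneg ?_ (sq_nonneg _)
    nlinarith [mul_nonneg (mul_nonneg (hsol t ht).1.2.1.le h3) (hreg t ht).1]
  have hAlow : ∀ t ∈ S, A0 ≤ A t := fun t ht => hinitA ▸ hmonoA h0S ht ht.1
  have hClow : ∀ t ∈ S, C0 ≤ C t := fun t ht => hinitC ▸ hmonoC h0S ht ht.1
  have hBup : ∀ t ∈ S, B t ≤ B0 := fun t ht => hinitB ▸ hantiB h0S ht ht.1
  have hAB : ∀ t ∈ S, A t ≤ B t := fun t ht => by
    linarith [hgap t ht, (hsol t ht).1.2.2]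
  induction T with
  | bot => exact absurd hT (by simp)
  | top =>
    have hSall : ∀ t : ℝ, 0 ≤ t → t ∈ S := fun t ht => ⟨ht, EReal.coe_lt_top t⟩
    obtain ⟨k, hk⟩ : ∃ k, k = 2 * A0 ^ 5 / B0 ^ 6 := ⟨_, rfl⟩
    have hkpos : 0 < k := by rw [hk]; positivity
    have hgrow : ∀ t ∈ S, k ≤ deriv A t := fun t ht => by
      obtain ⟨⟨pA, pB, pC⟩, hd, -⟩ := hsol t ht
      rw [hd.deriv, hk]
      have hA' := hAlow t ht
      have h2 : A0 ^ 2 ≤ -sl2F2 (A t) (B t) (C t) := by nlinarith [hF2 t ht]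
      have h3 : A0 ^ 2 ≤ sl2F3 (A t) (B t) (C t) := by nlinarith [hF3 t ht]
      have hnum : 2 * A0 ^ 5 ≤
          -2 * A t * sl2F2 (A t) (B t) (C t) * sl2F3 (A t) (B t) (C t) := by
        calc 2 * A0 ^ 5 = 2 * A0 * A0 ^ 2 * A0 ^ 2 := by ring
          _ ≤ 2 * A t * -sl2F2 (A t) (B t) (C t) * sl2F3 (A t) (B t) (C t) := by
              have : 0 ≤ -sl2F2 (A t) (B t) (C t) := (sq_nonneg A0).trans h2
              gcongr
          _ = _ := by ring
      have hden : (A t * B t * C t) ^ 2 ≤ B0 ^ 6 := by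
        calc (A t * B t * C t) ^ 2 ≤ (B0 * B0 * B0) ^ 2 := by
              have := hBup t ht
              have := hAB t ht
              have := (hreg t ht).2
              gcongr <;> linarith
          _ = B0 ^ 6 := by ring
      have : 0 < A0 ^ 5 := by positivity
      exact div_le_div₀ (by linarith) hnum (by positivity) hden
    have hτ : (0 : ℝ) ≤ B0 / k := by positivity
    have hτS := hSall _ hτ
    have := hSconv.mul_sub_le_image_sub_of_le_deriv
      (fun t ht => (hsol t ht).2.1.continuousAt.continuousWithinAt)
      (fun t ht => (hsol t (interior_subset ht)).2.1.differentiableAt.differentiableWithinAt)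
      (fun t ht => hgrow t (interior_subset ht)) 0 h0S (B0 / k) hτS hτ
    rw [sub_zero, mul_div_cancel₀ _ hkpos.ne', hinitA] at this
    linarith [hAB _ hτS, hBup _ hτS]
  | coe T =>
    have hT' : 0 < T := by exact_mod_cast hT
    have hSmem : ∀ t, 0 ≤ t → t < T → t ∈ S := fun t h1 h2 =>
      ⟨h1, EReal.coe_lt_coe_iff.2 h2⟩
    have hIoo : Ioo 0 T ⊆ S := fun t ht => hSmem t ht.1.le ht.2
    have hne : (Ioo 0 T).Nonempty := nonempty_Ioo.2 hT'
    have hlimA := (hmonoA.mono hIoo).tendsto_nhdsWithin_Ioo_left hne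
      ⟨B0, by rintro _ ⟨t, ht, rfl⟩; exact (hAB t (hIoo ht)).trans (hBup t (hIoo ht))⟩
    have hlimC := (hmonoC.mono hIoo).tendsto_nhdsWithin_Ioo_left hne
      ⟨B0, by rintro _ ⟨t, ht, rfl⟩; exact (hreg t (hIoo ht)).2.trans (hBup t (hIoo ht))⟩
    have hlimB := (hantiB.mono hIoo).tendsto_nhdsWithin_Ioo_left hne
      ⟨A0, by rintro _ ⟨t, ht, rfl⟩; exact (hAlow t (hIoo ht)).trans (hAB t (hIoo ht))⟩
    have hev : ∀ᶠ t in 𝓝[<] T, t ∈ S := by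
      filter_upwards [Ioo_mem_nhdsLT hT'] with t ht using hIoo ht
    obtain ⟨A', B', C', T', hTT', hsol', hagree⟩ := IsSolSL2.exists_extension hT'
      (fun t h1 h2 s hs => by rw [mem_singleton_iff.1 hs]; exact hsol t (hSmem t h1 h2))
      (hA0.trans_le (ge_of_tendsto hlimA (hev.mono hAlow)))
      (hA0.trans_le (ge_of_tendsto hlimB (hev.mono fun t ht => (hAlow t ht).trans (hAB t ht))))
      (hC0.trans_le (ge_of_tendsto hlimC (hev.mono hClow))) hlimA hlimB hlimC
    exact hext A' B' C' T' (EReal.coe_lt_coe_iff.2 hTT')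
      (fun t ht => hsol' t ht.1 (EReal.coe_lt_coe_iff.1 ht.2) t rfl)
      fun t _ ht => hagree t (EReal.coe_lt_coe_iff.1 ht)
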